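/- A c-atom A is antimonotone if and only if every element W⊎V of its abstract representation A_c* has W = ∅; in this case A_c* = {∅⊎T : T is maximal in A_c}. -/

import Mathlib

variable {α : Type*} [DecidableEq α]

/-- `S` is covered by the prefixed power set `W ⊎ V`. -/
def covers (W V S : Finset α) : Prop := W ⊆ S ∧ S ⊆ W ∪ V

/-- `I ⊎ J` is included in `W ⊎ V`. -/
def included (I J W V : Finset α) : Prop := ∀ S : Finset α, covers I J S → covers W V S

/-- `W ⊎ V` is a prefixed power set of the c-atom `(Ad, Ac)` all of whose
covered sets are admissible solutions. -/
def goodPPS (Ad : Finset α) (Ac : Set (Finset α)) (W V : Finset α) : Prop :=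
  W ∈ Ac ∧ V ⊆ Ad \ W ∧ ∀ T : Finset α, W ⊆ T → T ⊆ W ∪ V → T ∈ Ac

/-- `W ⊎ V` is `W`-maximal in the c-atom `(Ad, Ac)`. -/
def maximalPPS (Ad : Finset α) (Ac : Set (Finset α)) (W V : Finset α) : Prop :=
  goodPPS Ad Ac W V ∧ ∀ V' : Finset α, V ⊂ V' → V' ⊆ Ad \ W → ¬ goodPPS Ad Ac W V'

/-- The abstract representation `A_c*` of the c-atom `(Ad, Ac)`: all maximal
prefixed power sets, with redundant ones (those included in a distinct maximal
prefixed power set) removed. -/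
def absRep (Ad : Finset α) (Ac : Set (Finset α)) : Set (Finset α × Finset α) :=
  {p | maximalPPS Ad Ac p.1 p.2 ∧
    ∀ q : Finset α × Finset α, maximalPPS Ad Ac q.1 q.2 → q ≠ p →
      ¬ included p.1 p.2 q.1 q.2}

/-- The c-atom `(Ad, Ac)` is antimonotone: `Ac` is closed under subsets. -/
def antimonotoneCatom (Ac : Set (Finset α)) : Prop :=
  ∀ S ∈ Ac, ∀ S' : Finset α, S' ⊆ S → S' ∈ Ac

theorem included_iff_aux (I J W V : Finset α) :
    included I J W V ↔ W ⊆ I ∧ I ∪ J ⊆ W ∪ V := by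
  constructor
  · intro h
    exact ⟨(h I ⟨subset_rfl, Finset.subset_union_left⟩).1,
      (h (I ∪ J) ⟨Finset.subset_union_left, subset_rfl⟩).2⟩
  · rintro ⟨h1, h2⟩ S ⟨h3, h4⟩
    exact ⟨h1.trans h3, h4.trans h2⟩

theorem exists_absRep_aux (Ad : Finset α) (Ac : Set (Finset α)) (W V : Finset α)
    (h : goodPPS Ad Ac W V) :
    ∃ q ∈ absRep Ad Ac, q.1 ⊆ W ∧ W ∪ V ⊆ q.1 ∪ q.2 := by
  induction hn : Ad.card - V.card using Nat.strong_induction_on generalizing W V with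
  | _ n ih =>
    by_cases hp : (W, V) ∈ absRep Ad Ac
    · exact ⟨_, hp, subset_rfl, subset_rfl⟩
    have key : ∃ W' V', goodPPS Ad Ac W' V' ∧ W' ⊆ W ∧ W ∪ V ⊆ W' ∪ V' ∧ V ⊂ V' := by
      by_cases hm : maximalPPS Ad Ac W V
      · have : ∃ q : Finset α × Finset α, maximalPPS Ad Ac q.1 q.2 ∧ q ≠ (W, V) ∧
            included W V q.1 q.2 := by
          by_contra hc
          push Not at hc
          exact hp ⟨hm, hc⟩
        obtain ⟨⟨W', V'⟩, hq, hne, hinc⟩ := this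
        rw [included_iff_aux] at hinc
        obtain ⟨h1, h2⟩ := hinc
        simp only at h1 h2 hq
        have hd := h.2.1
        have hd' := hq.1.2.1
        have hsub : V ⊆ V' := by
          intro x hx
          have a1 := hd hx
          have a2 := h2 (Finset.mem_union_right _ hx)
          simp only [Finset.mem_sdiff, Finset.mem_union] at a1 a2
          exact a2.resolve_left fun b => a1.2 (h1 b)
        refine ⟨W', V', hq.1, h1, h2, hsub.ssubset_of_ne ?_⟩
        rintro rfl
        apply hne
        have : W' = W := by
          apply subset_antisymm h1
          intro x hx
          have a2 := h2 (Finset.mem_union_left _ hx)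
          rcases Finset.mem_union.1 a2 with b | b
          · exact b
          · exact absurd hx (Finset.mem_sdiff.1 (hd b)).2
        rw [this]
      · have : ∃ V', V ⊂ V' ∧ goodPPS Ad Ac W V' := by
          by_contra hc
          push Not at hc
          exact hm ⟨h, fun V' a _ => hc V' a⟩
        obtain ⟨V', a, b⟩ := this
        exact ⟨W, V', b, subset_rfl, Finset.union_subset_union_right a.1, a⟩
    obtain ⟨W', V', hg, h1, h2, h3⟩ := key
    have c1 := Finset.card_lt_card h3
    have c2 := Finset.card_le_card (hg.2.1.trans Finset.sdiff_subset)
    obtain ⟨q, hq, q1, q2⟩ := ih (Ad.card - V'.card) (by omega) W' V' hg rfl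
    exact ⟨q, hq, q1.trans h1, h2.trans q2⟩

theorem good_empty_aux (Ad : Finset α) (Ac : Set (Finset α)) (hAc : ∀ S ∈ Ac, S ⊆ Ad)
    (ha : antimonotoneCatom Ac) (T : Finset α) (hT : T ∈ Ac) : goodPPS Ad Ac ∅ T :=
  ⟨ha T hT _ (Finset.empty_subset _), by simpa using hAc T hT,
    fun S _ h => ha T hT S (by simpa using h)⟩

theorem absRep_fst_aux (Ad : Finset α) (Ac : Set (Finset α)) (hAc : ∀ S ∈ Ac, S ⊆ Ad)
    (ha : antimonotoneCatom Ac) (p : Finset α × Finset α) (hp : p ∈ absRep Ad Ac) :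
    p.1 = ∅ := by
  have hT : p.1 ∪ p.2 ∈ Ac := hp.1.1.2.2 _ Finset.subset_union_left subset_rfl
  obtain ⟨q, hq, q1, q2⟩ := exists_absRep_aux Ad Ac _ _ (good_empty_aux Ad Ac hAc ha _ hT)
  rw [Finset.empty_union] at q2
  by_cases e : q = p
  · subst e
    exact Finset.subset_empty.1 q1
  · exact absurd ((included_iff_aux _ _ _ _).2 ⟨q1.trans (Finset.empty_subset _), q2⟩)
      (hp.2 q hq.1 e)

theorem stmt_6 (Ad : Finset α) (Ac : Set (Finset α)) (hAc : ∀ S ∈ Ac, S ⊆ Ad) :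
    (antimonotoneCatom Ac ↔ ∀ p ∈ absRep Ad Ac, p.1 = (∅ : Finset α)) ∧
    (antimonotoneCatom Ac →
      absRep Ad Ac =
        {p | p.1 = (∅ : Finset α) ∧ p.2 ∈ Ac ∧ ∀ T ∈ Ac, p.2 ⊆ T → T = p.2}) := by
  refine ⟨⟨fun ha p hp => absRep_fst_aux Ad Ac hAc ha p hp, ?_⟩, ?_⟩
  · intro h S hS S' hS'
    have hg : goodPPS Ad Ac S ∅ := by
      refine ⟨hS, Finset.empty_subset _, fun T h1 h2 => ?_⟩
      rw [Finset.union_empty] at h2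
      rwa [subset_antisymm h2 h1]
    obtain ⟨q, hq, q1, q2⟩ := exists_absRep_aux Ad Ac _ _ hg
    have e := h q hq
    refine hq.1.1.2.2 S' (by rw [e]; exact Finset.empty_subset _) ?_
    exact hS'.trans (Finset.subset_union_left.trans q2)
  · intro ha
    ext ⟨W, V⟩
    constructor
    · intro hp
      have e : W = ∅ := absRep_fst_aux Ad Ac hAc ha _ hp
      subst e
      refine ⟨rfl, hp.1.1.2.2 _ (Finset.empty_subset _) (by simp), fun T hT hs => ?_⟩
      by_contra hne
      have hg := good_empty_aux Ad Ac hAc ha T hT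
      exact hp.1.2 T (hs.ssubset_of_ne (Ne.symm hne)) hg.2.1 hg
    · rintro ⟨e, hV, hmax⟩
      simp only at e hV hmax
      subst e
      obtain ⟨⟨W', V'⟩, hq, q1, q2⟩ :=
        exists_absRep_aux Ad Ac _ _ (good_empty_aux Ad Ac hAc ha V hV)
      have e : W' = ∅ := Finset.subset_empty.1 q1
      subst e
      have hV' : V' ∈ Ac := hq.1.1.2.2 _ (Finset.empty_subset _) (by simp)
      have := hmax V' hV' (by simpa using q2)
      rwa [this] at hq
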